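/- Let S be a finite multiset of colored items with colors in {1,…,Q}. If the color discrepancy of S satisfies δ ≤ 1, then S admits a color-alternating permutation, i.e. there exists a list containing exactly the elements of S (with multiplicity) in which no two consecutive items have the same color. -/

import Mathlib

/-- Number of items of color `q` in the multiset `S`. -/
def countColor {α : Type*} (color : α → ℕ) (S : Multiset α) (q : ℕ) : ℕ :=
  (S.filter (fun x => color x = q)).card

/-- Discrepancy of color `q` in `S`: `|S_q| − (|S| − |S_q|)`. -/
def delta {α : Type*} (color : α → ℕ) (S : Multiset α) (q : ℕ) : ℤ :=
  (countColor color S q : ℤ) - ((Multiset.card S : ℤ) - (countColor color S q : ℤ))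

/-- `S` admits a color-alternating permutation: a list with exactly the elements of `S`
(with multiplicity) in which no two consecutive items have the same color. -/
def HasAlternatingPerm {α : Type*} (color : α → ℕ) (S : Multiset α) : Prop :=
  ∃ l : List α, (l : Multiset α) = S ∧ List.Chain' (fun a b => color a ≠ color b) l

theorem countColor_cons_self {α : Type*} (color : α → ℕ) (x : α) (T : Multiset α) :
    countColor color (x ::ₘ T) (color x) = countColor color T (color x) + 1 := by
  simp [countColor]

theorem countColor_cons_ne {α : Type*} (color : α → ℕ) (x : α) (T : Multiset α) (q : ℕ)
    (h : color x ≠ q) : countColor color (x ::ₘ T) q = countColor color T q := by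
  simp [countColor, h]

theorem countColor_add_le {α : Type*} (color : α → ℕ) (T : Multiset α) (q r : ℕ)
    (h : q ≠ r) : countColor color T q + countColor color T r ≤ T.card := by
  induction T using Multiset.induction_on with
  | empty => simp [countColor]
  | cons x T ih =>
    rw [Multiset.card_cons]
    by_cases hq : color x = q
    · subst hq
      rw [countColor_cons_self, countColor_cons_ne _ _ _ _ h]
      omega
    · rw [countColor_cons_ne _ _ _ _ hq]
      by_cases hr : color x = r
      · subst hr
        rw [countColor_cons_self]
        omega
      · rw [countColor_cons_ne _ _ _ _ hr]
        omega

/-- Strengthened claim: an alternating list whose first item avoids the color `c`. -/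
theorem exists_alternating_avoiding {α : Type*} (color : α → ℕ) (n : ℕ) :
    ∀ (S : Multiset α) (c : ℕ), S.card = n → (∀ q, 2 * countColor color S q ≤ n + 1) →
      2 * countColor color S c ≤ n →
      ∃ l : List α, (l : Multiset α) = S ∧ (∀ a ∈ l.head?, c ≠ color a) ∧
        List.IsChain (fun a b => color a ≠ color b) l := by
  induction n with
  | zero =>
    intro S c hS _ _
    refine ⟨[], ?_, by simp, by simp⟩
    simpa using (Multiset.card_eq_zero.mp hS).symm
  | succ n ih =>
    intro S c hS hall hc
    have key : ∃ x ∈ S, c ≠ color x ∧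
        ∀ q, q ≠ color x → 2 * countColor color S q ≤ n + 1 := by
      by_cases hex : ∃ q, 2 * countColor color S q = n + 2
      · obtain ⟨q, hq⟩ := hex
        have hpos : 0 < (S.filter (fun x => color x = q)).card := by
          change 0 < countColor color S q
          omega
        obtain ⟨x, hx⟩ := Multiset.card_pos_iff_exists_mem.mp hpos
        rw [Multiset.mem_filter] at hx
        obtain ⟨hxS, rfl⟩ := hx
        refine ⟨x, hxS, ?_, ?_⟩
        · rintro rfl
          omega
        · intro r hr
          have := countColor_add_le color S r _ hr
          omega
      · push Not at hex
        have : ∃ x ∈ S, c ≠ color x := by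
          by_contra hcon
          push Not at hcon
          have h1 : S.filter (fun x => color x = c) = S :=
            Multiset.filter_eq_self.mpr (fun x hx => (hcon x hx).symm)
          have h2 : countColor color S c = n + 1 := by
            rw [countColor, h1, hS]
          omega
        obtain ⟨x, hx, hxc⟩ := this
        refine ⟨x, hx, hxc, fun q _ => ?_⟩
        have h1 := hall q
        have h2 := hex q
        omega
    obtain ⟨x, hxS, hxc, hq⟩ := key
    obtain ⟨T, rfl⟩ := Multiset.exists_cons_of_mem hxS
    rw [Multiset.card_cons] at hS
    have hself := hall (color x)
    rw [countColor_cons_self] at hself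
    obtain ⟨l, hl, hhead, hchain⟩ := ih T (color x) (by omega) (by
      intro q
      by_cases h : q = color x
      · subst h
        omega
      · have := hq q h
        rwa [countColor_cons_ne _ _ _ _ (Ne.symm h)] at this) (by omega)
    refine ⟨x :: l, ?_, ?_, ?_⟩
    · rw [← hl]
      rfl
    · simpa using hxc
    · exact List.isChain_cons.mpr ⟨hhead, hchain⟩

/-- If the color discrepancy of `S` satisfies `δ ≤ 1` (i.e. `δ_q ≤ 1` for every color
`q ∈ {1,…,Q}`), then `S` admits a color-alternating permutation. -/
theorem stmt_2 {α : Type*} (Q : ℕ) (hQ : 2 ≤ Q) (color : α → ℕ)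
    (hcolor : ∀ x, color x ∈ Finset.Icc 1 Q) (S : Multiset α)
    (hdelta : ∀ q ∈ Finset.Icc 1 Q, delta color S q ≤ 1) :
    HasAlternatingPerm color S := by
  have hzero : ∀ q, q ∉ Finset.Icc 1 Q → countColor color S q = 0 := by
    intro q hq
    rw [countColor, Multiset.card_eq_zero, Multiset.filter_eq_nil]
    rintro x _ rfl
    exact hq (hcolor x)
  obtain ⟨l, hl, _, hchain⟩ := exists_alternating_avoiding color S.card S 0 rfl (by
    intro q
    by_cases h : q ∈ Finset.Icc 1 Q
    · have := hdelta q h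
      rw [delta] at this
      omega
    · rw [hzero q h]
      omega) (by
    rw [hzero 0 (by simp)]
    omega)
  exact ⟨l, hl, hchain⟩
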